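/- Let 𝔥 ⊆ so(n) be a weak Berger algebra. Then each of the algebras ℝ·id ⊕ 𝔤^{1,𝔥}, ℝ·id ⊕ 𝔤^{2,𝔥}, ℝ·id ⊕ 𝔤^{3,𝔥,φ}, 𝔤^{α,θ,1,𝔥}, 𝔤^{θ,2,𝔥}, 𝔤^{θ,3,𝔥,φ} (with parameters α, θ, φ as in their definitions, and with z(𝔥) ≠ 0 whenever a nonzero φ is required) is a weakly irreducible Berger subalgebra of co(1,n+1) that is not contained in so(1,n+1). -/

import Mathlib

open Module

noncomputable section

namespace Weyl

variable {V : Type*} [AddCommGroup V] [Module ℝ V]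

/-- The endomorphism `X ∧ Y : Z ↦ B(X,Z)•Y − B(Y,Z)•X`. -/
def wedge (B : LinearMap.BilinForm ℝ V) (X Y : V) : Module.End ℝ V where
  toFun Z := B X Z • Y - B Y Z • X
  map_add' z z' := by simp only [map_add, add_smul]; abel
  map_smul' c z := by simp only [map_smul, smul_eq_mul, RingHom.id_apply, mul_smul, smul_sub]

/-- The Lie algebra `so(B)` of endomorphisms skew-symmetric with respect to `B`. -/
def soSet (B : LinearMap.BilinForm ℝ V) : Set (Module.End ℝ V) :=
  {A | ∀ x y, B (A x) y + B x (A y) = 0}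

/-- The conformal Lie algebra `co(B) = ℝ·id ⊕ so(B)`. -/
def coSet (B : LinearMap.BilinForm ℝ V) : Set (Module.End ℝ V) :=
  {F | ∃ c : ℝ, ∃ S ∈ soSet B, F = c • (1 : Module.End ℝ V) + S}

/-- The first prolongation `g^{(1)}` of a set of endomorphisms:
linear maps `φ : V → g` with `φ(X)Y = φ(Y)X`. -/
def firstProlong (g : Set (Module.End ℝ V)) : Set (V →ₗ[ℝ] Module.End ℝ V) :=
  {φ | (∀ x, φ x ∈ g) ∧ ∀ x y, φ x y = φ y x}

/-- `R` is an algebraic curvature tensor of type `g` (a linear map on `Λ²V`,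
encoded as an antisymmetric bilinear map, with values in `g`, satisfying the
Bianchi identity). -/
def IsCurv (g : Set (Module.End ℝ V)) (R : V →ₗ[ℝ] V →ₗ[ℝ] Module.End ℝ V) : Prop :=
  (∀ x y, R x y = - R y x) ∧ (∀ x y, R x y ∈ g) ∧
    ∀ x y z, R x y z + R y z x + R z x y = 0

/-- `L(ℛ(g))`: the span of all values of algebraic curvature tensors of type `g`. -/
def curvSpan (g : Set (Module.End ℝ V)) : Submodule ℝ (Module.End ℝ V) :=
  Submodule.span ℝ {F | ∃ R, IsCurv g R ∧ ∃ x y, F = R x y}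

/-- `g` is a Berger algebra: `L(ℛ(g)) = g`. -/
def IsBerger (g : Set (Module.End ℝ V)) : Prop :=
  (curvSpan g : Set (Module.End ℝ V)) = g

/-- `g` is (the underlying set of) a Lie subalgebra of `gl(V)`. -/
def IsLieSub (g : Set (Module.End ℝ V)) : Prop :=
  (0 : Module.End ℝ V) ∈ g ∧ (∀ F ∈ g, ∀ F' ∈ g, F + F' ∈ g) ∧
    (∀ (c : ℝ), ∀ F ∈ g, c • F ∈ g) ∧ ∀ F ∈ g, ∀ F' ∈ g, F * F' - F' * F ∈ g

/-- The subspace `W` is invariant under every element of `g`. -/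
def Invariant (g : Set (Module.End ℝ V)) (W : Submodule ℝ V) : Prop :=
  ∀ F ∈ g, ∀ x ∈ W, F x ∈ W

/-- The restriction of `B` to `W` is nondegenerate. -/
def IsNondegOn (B : LinearMap.BilinForm ℝ V) (W : Submodule ℝ V) : Prop :=
  ∀ x ∈ W, (∀ y ∈ W, B x y = 0) → x = 0

/-- Weak irreducibility: no proper nonzero invariant nondegenerate subspace. -/
def WeaklyIrred (B : LinearMap.BilinForm ℝ V) (g : Set (Module.End ℝ V)) : Prop :=
  ∀ W : Submodule ℝ V, Invariant g W → IsNondegOn B W → W = ⊥ ∨ W = ⊤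

/-- Irreducibility: no proper nonzero invariant subspace. -/
def Irred (g : Set (Module.End ℝ V)) : Prop :=
  ∀ W : Submodule ℝ V, Invariant g W → W = ⊥ ∨ W = ⊤

/-- The Euclidean dot product on `Fin n → ℝ`. -/
def dotE (n : ℕ) : LinearMap.BilinForm ℝ (Fin n → ℝ) :=
  LinearMap.mk₂ ℝ (fun x y => ∑ i, x i * y i)
    (fun x x' y => by simp [add_mul, Finset.sum_add_distrib])
    (fun c x y => by simp [Finset.mul_sum, mul_assoc])
    (fun x y y' => by simp [mul_add, Finset.sum_add_distrib])
    (fun c x y => by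
      simp only [Pi.smul_apply, smul_eq_mul, Finset.mul_sum]
      exact Finset.sum_congr rfl fun i _ => by ring)

/-- Minkowski space `ℝ^{1,n+1}` in Witt coordinates: the vector `(v, x, u)`
represents `v·p + x + u·q` with respect to a Witt basis `p, e₁, …, eₙ, q`. -/
abbrev Mink (n : ℕ) := ℝ × (Fin n → ℝ) × ℝ

/-- The Minkowski metric in Witt coordinates: `p, q` are isotropic, `(p,q) = 1`,
and the form is the Euclidean one on the `ℝⁿ`-part orthogonal to `p` and `q`. -/
def minkB (n : ℕ) : LinearMap.BilinForm ℝ (Mink n) :=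
  LinearMap.mk₂ ℝ (fun X Y => X.1 * Y.2.2 + X.2.2 * Y.1 + dotE n X.2.1 Y.2.1)
    (fun X X' Y => by
      simp only [Prod.fst_add, Prod.snd_add, Pi.add_apply, map_add,
        LinearMap.add_apply]
      ring)
    (fun c X Y => by
      simp only [Prod.smul_fst, Prod.smul_snd, smul_eq_mul, map_smul,
        LinearMap.smul_apply]
      ring)
    (fun X Y Y' => by
      simp only [Prod.fst_add, Prod.snd_add, Pi.add_apply, map_add,
        LinearMap.add_apply]
      ring)
    (fun c X Y => by
      simp only [Prod.smul_fst, Prod.smul_snd, smul_eq_mul, map_smul,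
        LinearMap.smul_apply]
      ring)

/-- The Witt basis vector `p`. -/
def pvec (n : ℕ) : Mink n := (1, 0, 0)

/-- The Witt basis vector `q`. -/
def qvec (n : ℕ) : Mink n := (0, 0, 1)

/-- The embedding of `ℝⁿ` into Minkowski space. -/
def emb {n : ℕ} (x : Fin n → ℝ) : Mink n := (0, x, 0)

/-- The element `(b, a, A, X) = b·id + (a, A, X)` of `co(1,n+1)_{ℝp}`:
it maps `p ↦ (a+b)·p`, `U ↦ (X,U)·p + A U + b·U` for `U ∈ ℝⁿ`, and
`q ↦ −X + (b−a)·q`. -/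
def coElem {n : ℕ} (b a : ℝ) (A : Module.End ℝ (Fin n → ℝ)) (X : Fin n → ℝ) :
    Module.End ℝ (Mink n) where
  toFun w := ((b + a) * w.1 + dotE n X w.2.1,
              b • w.2.1 + A w.2.1 - w.2.2 • X,
              (b - a) * w.2.2)
  map_add' w w' := by
    simp only [Prod.fst_add, Prod.snd_add, map_add, Prod.mk_add_mk, add_smul]
    refine Prod.ext (by ring) (Prod.ext ?_ (by ring))
    simp only [smul_add]
    abel
  map_smul' c w := by
    simp only [Prod.smul_fst, Prod.smul_snd, smul_eq_mul, map_smul,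
      RingHom.id_apply, Prod.smul_mk]
    refine Prod.ext (by simp; ring) (Prod.ext ?_ (by simp; ring))
    simp only [smul_smul, smul_sub, LinearMap.map_smul]
    rw [mul_comm]
    module

/-- The Lie algebra `so(n)` of skew-symmetric endomorphisms of Euclidean `ℝⁿ`. -/
def soE (n : ℕ) : Set (Module.End ℝ (Fin n → ℝ)) := soSet (dotE n)

/-- The subalgebra `co(1,n+1)_{ℝp}` of `co(1,n+1)` preserving the isotropic line `ℝp`,
whose elements are written `(b, a, A, X)`. -/
def coRp (n : ℕ) : Set (Module.End ℝ (Mink n)) :=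
  {F | ∃ b a : ℝ, ∃ A ∈ soE n, ∃ X : Fin n → ℝ, F = coElem b a A X}

/-- `P` is a weak curvature tensor of type `h ⊆ so(n)`. -/
def IsWeakCurv (n : ℕ) (h : Set (Module.End ℝ (Fin n → ℝ)))
    (P : (Fin n → ℝ) →ₗ[ℝ] Module.End ℝ (Fin n → ℝ)) : Prop :=
  (∀ x, P x ∈ h) ∧
    ∀ x y z, dotE n (P x y) z + dotE n (P y z) x + dotE n (P z x) y = 0

/-- The span of all values of weak curvature tensors of type `h`. -/
def weakSpan (n : ℕ) (h : Set (Module.End ℝ (Fin n → ℝ))) :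
    Submodule ℝ (Module.End ℝ (Fin n → ℝ)) :=
  Submodule.span ℝ {A | ∃ P, IsWeakCurv n h P ∧ ∃ U, A = P U}

/-- `h ⊆ so(n)` is a weak Berger algebra (equivalently, by Leistner's theorem,
the holonomy algebra of a Riemannian manifold). -/
def IsWeakBerger (n : ℕ) (h : Set (Module.End ℝ (Fin n → ℝ))) : Prop :=
  (weakSpan n h : Set (Module.End ℝ (Fin n → ℝ))) = h

/-- The linear map `θ` vanishes on the commutant `[h, h]`. -/
def VanishOnComm {n : ℕ} (h : Set (Module.End ℝ (Fin n → ℝ)))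
    (θ : Module.End ℝ (Fin n → ℝ) →ₗ[ℝ] ℝ) : Prop :=
  ∀ A ∈ h, ∀ B ∈ h, θ (A * B - B * A) = 0

/-- The linear map `θ` is nonzero on `h`. -/
def NonzeroOn {n : ℕ} (h : Set (Module.End ℝ (Fin n → ℝ)))
    (θ : Module.End ℝ (Fin n → ℝ) →ₗ[ℝ] ℝ) : Prop :=
  ∃ A ∈ h, θ A ≠ 0

/-- `ℝ·id ⊕ 𝔤^{1,𝔥}`. -/
def G1 (n : ℕ) (h : Set (Module.End ℝ (Fin n → ℝ))) : Set (Module.End ℝ (Mink n)) :=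
  {F | ∃ b a : ℝ, ∃ A ∈ h, ∃ X : Fin n → ℝ, F = coElem b a A X}

/-- `ℝ·id ⊕ 𝔤^{2,𝔥}`. -/
def G2 (n : ℕ) (h : Set (Module.End ℝ (Fin n → ℝ))) : Set (Module.End ℝ (Mink n)) :=
  {F | ∃ b : ℝ, ∃ A ∈ h, ∃ X : Fin n → ℝ, F = coElem b 0 A X}

/-- `ℝ·id ⊕ 𝔤^{3,𝔥,φ}`. -/
def G3 (n : ℕ) (h : Set (Module.End ℝ (Fin n → ℝ)))
    (φ : Module.End ℝ (Fin n → ℝ) →ₗ[ℝ] ℝ) : Set (Module.End ℝ (Mink n)) :=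
  {F | ∃ b : ℝ, ∃ A ∈ h, ∃ X : Fin n → ℝ, F = coElem b (φ A) A X}

/-- `𝔤^{α,θ,1,𝔥}`. -/
def G4 (n : ℕ) (h : Set (Module.End ℝ (Fin n → ℝ))) (α : ℝ)
    (θ : Module.End ℝ (Fin n → ℝ) →ₗ[ℝ] ℝ) : Set (Module.End ℝ (Mink n)) :=
  {F | ∃ a : ℝ, ∃ A ∈ h, ∃ X : Fin n → ℝ, F = coElem (α * a + θ A) a A X}

/-- `𝔤^{θ,2,𝔥}`. -/
def G5 (n : ℕ) (h : Set (Module.End ℝ (Fin n → ℝ)))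
    (θ : Module.End ℝ (Fin n → ℝ) →ₗ[ℝ] ℝ) : Set (Module.End ℝ (Mink n)) :=
  {F | ∃ A ∈ h, ∃ X : Fin n → ℝ, F = coElem (θ A) 0 A X}

/-- `𝔤^{θ,3,𝔥,φ}`. -/
def G6 (n : ℕ) (h : Set (Module.End ℝ (Fin n → ℝ)))
    (θ φ : Module.End ℝ (Fin n → ℝ) →ₗ[ℝ] ℝ) : Set (Module.End ℝ (Mink n)) :=
  {F | ∃ A ∈ h, ∃ X : Fin n → ℝ, F = coElem (θ A) (φ A) A X}

/-- The center of `𝔥` is nonzero. -/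
def CenterNonzero {n : ℕ} (h : Set (Module.End ℝ (Fin n → ℝ))) : Prop :=
  ∃ A ∈ h, A ≠ 0 ∧ ∀ B ∈ h, A * B = B * A

/-- `G` is a weakly irreducible Berger subalgebra of `co(1,n+1)` not contained
in `so(1,n+1)`. -/
def GoodAlg (n : ℕ) (G : Set (Module.End ℝ (Mink n))) : Prop :=
  G ⊆ coSet (minkB n) ∧ IsLieSub G ∧ WeaklyIrred (minkB n) G ∧
    ¬ G ⊆ soSet (minkB n) ∧ IsBerger G

/-!
All six families have the form `S ⋉ ℝⁿ`, where `S` is a space of triples `(b, a, A)` in the Levi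
part `ℝ ⊕ ℝ ⊕ so(n)` of `co(1,n+1)_{ℝp}` and `ℝⁿ` is the ideal of elements `(0, 0, 0, X)`. These
elements already force weak irreducibility. A linear map `Q : ℝⁿ → S` whose `so(n)`-component
satisfies the cyclic identity of `𝒫(so(n))` extends to a curvature tensor with `R(U, q) = Q(U)`,
and `R(U, q) = (0, 0, 0, U)` is the value of another one. Hence `S ⋉ ℝⁿ` is Berger as soon as the
values of such `Q` span `S`. For the triples `(θ(A) + k₁, φ(A) + k₂, A)` with `k` in a fixed
subspace of `ℝ²`, the maps `U ↦ (θ(P(U)), φ(P(U)), P(U))` with `P ∈ 𝒫(𝔥)` and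
`U ↦ Uᵢ·(k₁, k₂, 0)` suffice.
-/

theorem isBerger_of_le_curvSpan {G : Submodule ℝ (Module.End ℝ V)}
    (hG : G ≤ curvSpan (G : Set (Module.End ℝ V))) : IsBerger (G : Set (Module.End ℝ V)) := by
  have hle : curvSpan (G : Set (Module.End ℝ V)) ≤ G := by
    refine Submodule.span_le.2 ?_
    rintro _ ⟨R, hR, x, y, rfl⟩
    exact hR.2.1 x y
  exact congrArg SetLike.coe (hle.antisymm hG)

theorem dotE_comm {n : ℕ} (x y : Fin n → ℝ) : dotE n x y = dotE n y x := dotProduct_comm x y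

theorem dotE_self_eq_zero {n : ℕ} {x : Fin n → ℝ} : dotE n x x = 0 ↔ x = 0 :=
  dotProduct_self_eq_zero (v := x)

theorem minkB_apply {n : ℕ} (v w : Mink n) :
    minkB n v w = v.1 * w.2.2 + v.2.2 * w.1 + dotE n v.2.1 w.2.1 := rfl

theorem eq_smul_pvec_add_emb_add_smul_qvec {n : ℕ} (w : Mink n) :
    w = w.1 • pvec n + emb w.2.1 + w.2.2 • qvec n := by
  simp [pvec, qvec, emb]

section Elements

variable {n : ℕ}

theorem coElem_apply (b a : ℝ) (A : Module.End ℝ (Fin n → ℝ)) (X : Fin n → ℝ) (w : Mink n) :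
    coElem b a A X w =
      ((b + a) * w.1 + dotE n X w.2.1, b • w.2.1 + A w.2.1 - w.2.2 • X, (b - a) * w.2.2) := rfl

theorem coElem_zero_mem_soSet (a : ℝ) {A : Module.End ℝ (Fin n → ℝ)} (hA : A ∈ soE n)
    (X : Fin n → ℝ) : coElem 0 a A X ∈ soSet (minkB n) := by
  intro v w
  have hskew := hA v.2.1 w.2.1
  simp only [minkB_apply, coElem_apply, map_add, map_sub, map_smul, LinearMap.add_apply,
    LinearMap.sub_apply, LinearMap.smul_apply, smul_eq_mul]
  rw [dotE_comm v.2.1 X]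
  linear_combination hskew

theorem coElem_mem_coSet (b a : ℝ) {A : Module.End ℝ (Fin n → ℝ)} (hA : A ∈ soE n)
    (X : Fin n → ℝ) : coElem b a A X ∈ coSet (minkB n) := by
  refine ⟨b, coElem 0 a A X, coElem_zero_mem_soSet a hA X, LinearMap.ext fun w => ?_⟩
  simp only [coElem_apply, LinearMap.add_apply, LinearMap.smul_apply, Module.End.one_apply]
  refine Prod.ext ?_ (Prod.ext ?_ ?_)
  · simp only [Prod.fst_add, Prod.smul_fst, smul_eq_mul]; ring
  · simp only [Prod.fst_add, Prod.snd_add, Prod.smul_fst, Prod.smul_snd]; module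
  · simp only [Prod.snd_add, Prod.smul_snd, smul_eq_mul]; ring

theorem eq_zero_of_coElem_mem_soSet {b a : ℝ} {A : Module.End ℝ (Fin n → ℝ)} {X : Fin n → ℝ}
    (hF : coElem b a A X ∈ soSet (minkB n)) : b = 0 := by
  have hpq := hF (pvec n) (qvec n)
  simp only [minkB_apply, coElem_apply, pvec, qvec, map_zero, smul_zero, zero_smul,
    one_smul, LinearMap.zero_apply] at hpq
  linarith

theorem coElem_bracket (b a b' a' : ℝ) {A A' : Module.End ℝ (Fin n → ℝ)}
    (hA : A ∈ soE n) (hA' : A' ∈ soE n) (X X' : Fin n → ℝ) :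
    coElem b a A X * coElem b' a' A' X' - coElem b' a' A' X' * coElem b a A X =
      coElem 0 0 (A * A' - A' * A) (a • X' + A X' - a' • X - A' X) := by
  refine LinearMap.ext fun w => ?_
  have hskew := hA X' w.2.1
  have hskew' := hA' X w.2.1
  simp only [LinearMap.sub_apply, Module.End.mul_apply, coElem_apply, map_add, map_sub, map_smul,
    LinearMap.add_apply, LinearMap.smul_apply, smul_eq_mul, Prod.mk_sub_mk]
  refine Prod.ext ?_ (Prod.ext ?_ (by dsimp only; ring))
  · dsimp only
    rw [dotE_comm X' X]
    linear_combination hskew' - hskew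
  · dsimp only
    module

theorem coElem_translation_apply (X : Fin n → ℝ) (w : Mink n) :
    coElem 0 0 0 X w = dotE n X w.2.1 • pvec n - w.2.2 • emb X := by
  simp [coElem_apply, pvec, emb]

end Elements

section WeakIrreducibility

variable {n : ℕ} {W : Submodule ℝ (Mink n)}

theorem pvec_mem_of_snd_snd_ne_zero (hn : 1 ≤ n)
    (hW : ∀ X : Fin n → ℝ, ∀ w ∈ W, coElem 0 0 0 X w ∈ W) {w : Mink n} (hw : w ∈ W)
    (hq : w.2.2 ≠ 0) : pvec n ∈ W := by
  have : NeZero n := ⟨Nat.one_le_iff_ne_zero.1 hn⟩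
  have hX : dotE n 1 1 ≠ 0 := fun h0 => one_ne_zero (dotE_self_eq_zero.1 h0)
  have hsq : coElem 0 0 0 1 (coElem 0 0 0 1 w) = -(w.2.2 * dotE n 1 1) • pvec n := by
    simp only [coElem_translation_apply]
    simp [pvec, emb]
  refine (W.smul_mem_iff (neg_ne_zero.2 (mul_ne_zero hq hX))).1 ?_
  rw [← hsq]
  exact hW 1 _ (hW 1 w hw)

theorem eq_top_of_snd_snd_ne_zero (hn : 1 ≤ n)
    (hW : ∀ X : Fin n → ℝ, ∀ w ∈ W, coElem 0 0 0 X w ∈ W) {w : Mink n} (hw : w ∈ W)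
    (hq : w.2.2 ≠ 0) : W = ⊤ := by
  have p_mem : pvec n ∈ W := pvec_mem_of_snd_snd_ne_zero hn hW hw hq
  have emb_mem (X : Fin n → ℝ) : emb X ∈ W := by
    refine (W.smul_mem_iff hq).1 ?_
    rw [← sub_sub_cancel (dotE n X w.2.1 • pvec n) (w.2.2 • emb X), ← coElem_translation_apply]
    exact W.sub_mem (W.smul_mem _ p_mem) (hW X w hw)
  have q_mem : qvec n ∈ W := by
    refine (W.smul_mem_iff hq).1 ?_
    rw [← sub_eq_of_eq_add' (eq_smul_pvec_add_emb_add_smul_qvec w)]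
    exact W.sub_mem hw (W.add_mem (W.smul_mem _ p_mem) (emb_mem _))
  refine eq_top_iff.2 fun v _ => ?_
  rw [eq_smul_pvec_add_emb_add_smul_qvec v]
  exact W.add_mem (W.add_mem (W.smul_mem _ p_mem) (emb_mem _)) (W.smul_mem _ q_mem)

theorem eq_bot_of_snd_snd_eq_zero (hW : ∀ X : Fin n → ℝ, ∀ w ∈ W, coElem 0 0 0 X w ∈ W)
    (hN : IsNondegOn (minkB n) W) (hq : ∀ w ∈ W, w.2.2 = 0) : W = ⊥ := by
  have hx : ∀ w ∈ W, w.2.1 = 0 := by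
    intro w hw
    have himage : coElem 0 0 0 w.2.1 w = dotE n w.2.1 w.2.1 • pvec n := by
      rw [coElem_translation_apply, hq w hw, zero_smul, sub_zero]
    have hzero := hN _ (hW w.2.1 w hw) fun y hy => by
      simp [himage, minkB_apply, pvec, hq y hy]
    rw [himage] at hzero
    exact dotE_self_eq_zero.1 (by simpa [pvec] using hzero)
  refine (Submodule.eq_bot_iff W).2 fun w hw => hN w hw fun y hy => ?_
  simp [minkB_apply, hq y hy, hq w hw, hx y hy]

theorem weaklyIrred_of_translations_mem (hn : 1 ≤ n) {G : Set (Module.End ℝ (Mink n))}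
    (hG : ∀ X, coElem 0 0 0 X ∈ G) : WeaklyIrred (minkB n) G := by
  intro W hinv hN
  have hW (X : Fin n → ℝ) : ∀ w ∈ W, coElem 0 0 0 X w ∈ W := hinv _ (hG X)
  by_cases hq : ∀ w ∈ W, w.2.2 = 0
  · exact Or.inl (eq_bot_of_snd_snd_eq_zero hW hN hq)
  · push Not at hq
    obtain ⟨w, hw, hq⟩ := hq
    exact Or.inr (eq_top_of_snd_snd_ne_zero hn hW hw hq)

end WeakIrreducibility

/-- The triples `(b, a, A)`; those with `A ∈ so(n)` are the Levi part `ℝ ⊕ ℝ ⊕ so(n)` of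
`co(1,n+1)_{ℝp}`. The skew-symmetry of `A` is left to hypotheses, which keeps this a plain product
of vector spaces. -/
abbrev LeviPart (n : ℕ) := ℝ × ℝ × Module.End ℝ (Fin n → ℝ)

/-- `coElem` as a linear map in the pair `((b, a, A), X)`. -/
def coElemₗ (n : ℕ) : LeviPart n × (Fin n → ℝ) →ₗ[ℝ] Module.End ℝ (Mink n) where
  toFun s := coElem s.1.1 s.1.2.1 s.1.2.2 s.2
  map_add' s s' := by
    refine LinearMap.ext fun w => ?_
    simp only [Prod.fst_add, Prod.snd_add, coElem_apply, map_add, LinearMap.add_apply,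
      Prod.mk_add_mk]
    exact Prod.ext (by dsimp only; ring) (Prod.ext (by dsimp only; module) (by dsimp only; ring))
  map_smul' c s := by
    refine LinearMap.ext fun w => ?_
    simp only [Prod.smul_fst, Prod.smul_snd, smul_eq_mul, coElem_apply, map_smul,
      LinearMap.smul_apply, RingHom.id_apply, Prod.smul_mk]
    exact Prod.ext (by dsimp only; ring) (Prod.ext (by dsimp only; module) (by dsimp only; ring))

theorem coElemₗ_apply {n : ℕ} (s : LeviPart n) (X : Fin n → ℝ) :
    coElemₗ n (s, X) = coElem s.1 s.2.1 s.2.2 X := rfl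

/-- The space `S ⋉ ℝⁿ` of all `(b, a, A, X)` with `(b, a, A) ∈ S`, the common shape of the six
families. -/
def semidirect {n : ℕ} (S : Submodule ℝ (LeviPart n)) : Submodule ℝ (Module.End ℝ (Mink n)) :=
  (S.prod ⊤).map (coElemₗ n)

/-- A weak curvature tensor of type `S`: a linear map `ℝⁿ → S` whose `so(n)`-component satisfies
the cyclic identity defining `𝒫(so(n))`. -/
def IsLeviWeakCurv {n : ℕ} (S : Submodule ℝ (LeviPart n)) (Q : (Fin n → ℝ) →ₗ[ℝ] LeviPart n) :
    Prop :=
  (∀ x, Q x ∈ S) ∧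
    ∀ x y z, dotE n ((Q x).2.2 y) z + dotE n ((Q y).2.2 z) x + dotE n ((Q z).2.2 x) y = 0

/-- The span of all values of weak curvature tensors of type `S`, the analogue of `weakSpan` for
spaces of triples. -/
def leviWeakSpan {n : ℕ} (S : Submodule ℝ (LeviPart n)) : Submodule ℝ (LeviPart n) :=
  Submodule.span ℝ {s | ∃ Q, IsLeviWeakCurv S Q ∧ ∃ U, s = Q U}

section Curvature

variable {n : ℕ} (Q : (Fin n → ℝ) →ₗ[ℝ] LeviPart n) (T : Module.End ℝ (Fin n → ℝ))

/-- The vector of `ℝⁿ` dual to the sum of the first two components of `Q`, by which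
`leviCurv Q T` acts on the pair `(p, q)`. -/
def leviDualVec : Fin n → ℝ :=
  (dotProductEquiv ℝ (Fin n)).symm
    (LinearMap.fst ℝ _ _ ∘ₗ Q + LinearMap.fst ℝ _ _ ∘ₗ LinearMap.snd ℝ _ _ ∘ₗ Q)

theorem dotE_leviDualVec (U : Fin n → ℝ) : dotE n (leviDualVec Q) U = (Q U).1 + (Q U).2.1 :=
  LinearMap.congr_fun ((dotProductEquiv ℝ (Fin n)).apply_symm_apply _) U

/-- The pairs `((b, a, A), X)` whose antisymmetrization in `x, y` gives the values `R(x, y)` of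
`leviCurv Q T`. -/
def leviHalfCurv : Mink n →ₗ[ℝ] Mink n →ₗ[ℝ] LeviPart n × (Fin n → ℝ) :=
  LinearMap.mk₂ ℝ
    (fun x y => (y.2.2 • Q x.2.1, y.2.2 • T x.2.1 + (Q y.2.1).1 • x.2.1 + (Q y.2.1).2.2 x.2.1 +
      (x.1 * y.2.2) • leviDualVec Q))
    (fun x x' y => by
      simp only [Prod.fst_add, Prod.snd_add, map_add, Prod.mk_add_mk]
      exact Prod.ext (by dsimp only; module) (by dsimp only; module))
    (fun c x y => by
      simp only [Prod.smul_fst, Prod.smul_snd, map_smul, smul_eq_mul, Prod.smul_mk]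
      exact Prod.ext (by dsimp only; module) (by dsimp only; module))
    (fun x y y' => by
      simp only [Prod.fst_add, Prod.snd_add, map_add, Prod.mk_add_mk, LinearMap.add_apply]
      exact Prod.ext (by dsimp only; module) (by dsimp only; module))
    (fun c x y => by
      simp only [Prod.smul_fst, Prod.smul_snd, map_smul, smul_eq_mul, Prod.smul_mk,
        LinearMap.smul_apply]
      exact Prod.ext (by dsimp only; module) (by dsimp only; module))

-- Subtraction on iterated spaces of linear maps is not found at the default depth.
set_option maxSynthPendingDepth 3 in
/-- The curvature tensor with `R(U, q) = (Q(U), T(U))` for `U ∈ ℝⁿ`; the remaining terms are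
dictated by the Bianchi identity. -/
def leviCurv : Mink n →ₗ[ℝ] Mink n →ₗ[ℝ] Module.End ℝ (Mink n) :=
  (leviHalfCurv Q T - (leviHalfCurv Q T).flip).compr₂ (coElemₗ n)

variable {Q T}

set_option maxSynthPendingDepth 3 in
theorem leviCurv_apply (x y : Mink n) :
    leviCurv Q T x y = coElemₗ n
      (Q (y.2.2 • x.2.1 - x.2.2 • y.2.1),
        T (y.2.2 • x.2.1 - x.2.2 • y.2.1) +
          ((Q y.2.1).1 • x.2.1 - (Q x.2.1).1 • y.2.1 + (Q y.2.1).2.2 x.2.1 - (Q x.2.1).2.2 y.2.1) +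
          (x.1 * y.2.2 - x.2.2 * y.1) • leviDualVec Q) := by
  refine congrArg (coElemₗ n) (Prod.ext ?_ ?_)
  · simp [leviHalfCurv]
  · simp only [leviHalfCurv, LinearMap.sub_apply, LinearMap.mk₂_apply, LinearMap.flip_apply,
      Prod.mk_sub_mk, map_sub, map_smul]
    module

theorem leviCurv_emb_qvec (U : Fin n → ℝ) :
    leviCurv Q T (emb U) (qvec n) = coElemₗ n (Q U, T U) := by
  simp [leviCurv_apply, emb, qvec]

set_option maxSynthPendingDepth 3 in
theorem leviCurv_antisymm (x y : Mink n) : leviCurv Q T x y = -leviCurv Q T y x := by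
  simp only [leviCurv, LinearMap.compr₂_apply, LinearMap.sub_apply, LinearMap.flip_apply]
  rw [← map_neg, neg_sub]

theorem IsLeviWeakCurv.cyclic_sub_eq_zero {S : Submodule ℝ (LeviPart n)}
    (hso : ∀ s ∈ S, s.2.2 ∈ soE n) (hQ : IsLeviWeakCurv S Q) (x y z : Fin n → ℝ) :
    dotE n ((Q y).2.2 x - (Q x).2.2 y) z + dotE n ((Q z).2.2 y - (Q y).2.2 z) x +
      dotE n ((Q x).2.2 z - (Q z).2.2 x) y = 0 := by
  have hcyc := hQ.2 x y z
  have hx := hso _ (hQ.1 x) y z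
  have hy := hso _ (hQ.1 y) z x
  have hz := hso _ (hQ.1 z) x y
  rw [dotE_comm y] at hx
  rw [dotE_comm z] at hy
  rw [dotE_comm x] at hz
  simp only [map_sub, LinearMap.sub_apply]
  linear_combination hx + hy + hz - 2 * hcyc

theorem leviCurv_bianchi {S : Submodule ℝ (LeviPart n)} (hso : ∀ s ∈ S, s.2.2 ∈ soE n)
    (hQ : IsLeviWeakCurv S Q) (hT : (dotE n).IsSelfAdjoint T) (x y z : Mink n) :
    leviCurv Q T x y z + leviCurv Q T y z x + leviCurv Q T z x y = 0 := by
  simp only [leviCurv_apply, coElemₗ_apply, coElem_apply, map_add, map_sub, map_smul,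
    Prod.fst_sub, Prod.snd_sub, Prod.smul_fst, Prod.smul_snd,
    LinearMap.add_apply, LinearMap.sub_apply, LinearMap.smul_apply, smul_eq_mul,
    Prod.mk_add_mk, dotE_leviDualVec]
  refine Prod.ext ?_ (Prod.ext ?_ ?_)
  · have hcyc := hQ.cyclic_sub_eq_zero hso x.2.1 y.2.1 z.2.1
    have hxy := hT x.2.1 y.2.1
    have hyz := hT y.2.1 z.2.1
    have hzx := hT z.2.1 x.2.1
    rw [dotE_comm x.2.1] at hxy
    rw [dotE_comm y.2.1] at hyz
    rw [dotE_comm z.2.1] at hzx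
    simp only [map_sub, LinearMap.sub_apply] at hcyc
    dsimp only [Prod.fst_zero]
    rw [dotE_comm y.2.1 x.2.1, dotE_comm z.2.1 x.2.1, dotE_comm z.2.1 y.2.1]
    linear_combination hcyc - z.2.2 * hxy - x.2.2 * hyz - y.2.2 * hzx
  · dsimp only [Prod.fst_zero, Prod.snd_zero]
    module
  · dsimp only [Prod.snd_zero]
    ring

theorem leviCurv_mem {S : Submodule ℝ (LeviPart n)} (hQ : ∀ x, Q x ∈ S) (x y : Mink n) :
    leviCurv Q T x y ∈ semidirect S := by
  rw [leviCurv_apply]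
  exact Submodule.mem_map_of_mem ⟨hQ _, trivial⟩

theorem isCurv_leviCurv {S : Submodule ℝ (LeviPart n)} (hso : ∀ s ∈ S, s.2.2 ∈ soE n)
    (hQ : IsLeviWeakCurv S Q) (hT : (dotE n).IsSelfAdjoint T) :
    IsCurv (semidirect S : Set _) (leviCurv Q T) :=
  ⟨leviCurv_antisymm, leviCurv_mem hQ.1, leviCurv_bianchi hso hQ hT⟩

theorem coElemₗ_mem_curvSpan {S : Submodule ℝ (LeviPart n)} (hso : ∀ s ∈ S, s.2.2 ∈ soE n)
    (hQ : IsLeviWeakCurv S Q) (hT : (dotE n).IsSelfAdjoint T) (U : Fin n → ℝ) :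
    coElemₗ n (Q U, T U) ∈ curvSpan (semidirect S : Set _) :=
  Submodule.subset_span
    ⟨_, isCurv_leviCurv hso hQ hT, emb U, qvec n, (leviCurv_emb_qvec U).symm⟩

end Curvature

section Semidirect

variable {n : ℕ} {S : Submodule ℝ (LeviPart n)}

theorem mem_semidirect {F : Module.End ℝ (Mink n)} :
    F ∈ semidirect S ↔ ∃ s ∈ S, ∃ X, F = coElem s.1 s.2.1 s.2.2 X := by
  constructor
  · rintro ⟨⟨s, X⟩, ⟨hs, -⟩, rfl⟩
    exact ⟨s, hs, X, rfl⟩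
  · rintro ⟨s, hs, X, rfl⟩
    exact ⟨(s, X), ⟨hs, trivial⟩, rfl⟩

theorem semidirect_subset_coSet (hso : ∀ s ∈ S, s.2.2 ∈ soE n) :
    (semidirect S : Set _) ⊆ coSet (minkB n) := by
  intro F hF
  obtain ⟨s, hs, X, rfl⟩ := mem_semidirect.1 hF
  exact coElem_mem_coSet _ _ (hso s hs) X

theorem not_semidirect_subset_soSet (hne : ∃ s ∈ S, s.1 ≠ 0) :
    ¬ (semidirect S : Set _) ⊆ soSet (minkB n) := by
  obtain ⟨s, hs, hb⟩ := hne
  exact fun hsub => hb (eq_zero_of_coElem_mem_soSet (hsub (mem_semidirect.2 ⟨s, hs, 0, rfl⟩)))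

theorem isLieSub_semidirect (hso : ∀ s ∈ S, s.2.2 ∈ soE n)
    (hbr : ∀ s ∈ S, ∀ s' ∈ S, (0, 0, s.2.2 * s'.2.2 - s'.2.2 * s.2.2) ∈ S) :
    IsLieSub (semidirect S : Set (Module.End ℝ (Mink n))) := by
  refine ⟨zero_mem _, fun _ hF _ hF' => add_mem hF hF', fun c _ hF => Submodule.smul_mem _ c hF,
    fun F hF F' hF' => ?_⟩
  obtain ⟨s, hs, X, rfl⟩ := mem_semidirect.1 hF
  obtain ⟨s', hs', X', rfl⟩ := mem_semidirect.1 hF'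
  rw [coElem_bracket _ _ _ _ (hso s hs) (hso s' hs')]
  exact mem_semidirect.2 ⟨_, hbr s hs s' hs', _, rfl⟩

theorem weaklyIrred_semidirect (hn : 1 ≤ n) :
    WeaklyIrred (minkB n) (semidirect S : Set _) :=
  weaklyIrred_of_translations_mem hn fun X => mem_semidirect.2 ⟨0, S.zero_mem, X, rfl⟩

theorem isBerger_semidirect (hso : ∀ s ∈ S, s.2.2 ∈ soE n) (hS : S ≤ leviWeakSpan S) :
    IsBerger (semidirect S : Set (Module.End ℝ (Mink n))) := by
  have levi_mem : ∀ s ∈ S, coElemₗ n (s, 0) ∈ curvSpan (semidirect S : Set _) := by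
    have hle : leviWeakSpan S ≤ (curvSpan (semidirect S : Set _)).comap
        (coElemₗ n ∘ₗ LinearMap.inl ℝ _ _) := by
      refine Submodule.span_le.2 ?_
      rintro _ ⟨Q, hQ, U, rfl⟩
      exact coElemₗ_mem_curvSpan (T := 0) hso hQ (fun _ _ => by simp) U
    exact fun s hs => hle (hS hs)
  have translation_mem (X : Fin n → ℝ) : coElemₗ n (0, X) ∈ curvSpan (semidirect S : Set _) :=
    coElemₗ_mem_curvSpan (Q := 0) (T := 1) hso ⟨fun _ => S.zero_mem, by simp⟩
      LinearMap.isAdjointPair_one X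
  refine isBerger_of_le_curvSpan ?_
  rintro _ ⟨⟨s, X⟩, ⟨hs, -⟩, rfl⟩
  rw [← Prod.fst_add_snd (s, X), map_add]
  exact add_mem (levi_mem s hs) (translation_mem X)

theorem goodAlg_semidirect (hn : 1 ≤ n) (hso : ∀ s ∈ S, s.2.2 ∈ soE n)
    (hbr : ∀ s ∈ S, ∀ s' ∈ S, (0, 0, s.2.2 * s'.2.2 - s'.2.2 * s.2.2) ∈ S)
    (hS : S ≤ leviWeakSpan S) (hne : ∃ s ∈ S, s.1 ≠ 0) :
    GoodAlg n (semidirect S : Set _) :=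
  ⟨semidirect_subset_coSet hso, isLieSub_semidirect hso hbr, weaklyIrred_semidirect hn,
    not_semidirect_subset_soSet hne, isBerger_semidirect hso hS⟩

end Semidirect

/-- The linear map `A ↦ (θ(A), φ(A), A)`. -/
def leviGraphMap {n : ℕ} (θ φ : Module.End ℝ (Fin n → ℝ) →ₗ[ℝ] ℝ) :
    Module.End ℝ (Fin n → ℝ) →ₗ[ℝ] LeviPart n :=
  θ.prod (φ.prod LinearMap.id)

/-- The linear map `(b, a) ↦ (b, a, 0)`. -/
def leviScalarMap (n : ℕ) : ℝ × ℝ →ₗ[ℝ] LeviPart n :=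
  (LinearMap.fst ℝ ℝ ℝ).prod ((LinearMap.snd ℝ ℝ ℝ).prod 0)

/-- The space of triples `(θ(A) + k₁, φ(A) + k₂, A)` with `A ∈ 𝔥` and `k ∈ K`. Each of the six
families is `semidirect` of such a space: `K` is everything for `ℝ·id ⊕ 𝔤^{1,𝔥}`, is spanned by
`(1, 0)` for `ℝ·id ⊕ 𝔤^{2,𝔥}` and `ℝ·id ⊕ 𝔤^{3,𝔥,φ}` and by `(α, 1)` for `𝔤^{α,θ,1,𝔥}`, and is
zero for `𝔤^{θ,2,𝔥}` and `𝔤^{θ,3,𝔥,φ}`. -/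
def leviGraph {n : ℕ} (𝔥 : Submodule ℝ (Module.End ℝ (Fin n → ℝ))) (K : Submodule ℝ (ℝ × ℝ))
    (θ φ : Module.End ℝ (Fin n → ℝ) →ₗ[ℝ] ℝ) : Submodule ℝ (LeviPart n) :=
  𝔥.map (leviGraphMap θ φ) ⊔ K.map (leviScalarMap n)

section LeviGraph

variable {n : ℕ} {𝔥 : Submodule ℝ (Module.End ℝ (Fin n → ℝ))} {K : Submodule ℝ (ℝ × ℝ)}
  {θ φ : Module.End ℝ (Fin n → ℝ) →ₗ[ℝ] ℝ}

theorem leviGraphMap_mem {A : Module.End ℝ (Fin n → ℝ)} (hA : A ∈ 𝔥) :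
    leviGraphMap θ φ A ∈ leviGraph 𝔥 K θ φ :=
  Submodule.mem_sup_left (Submodule.mem_map_of_mem hA)

theorem leviScalarMap_mem {k : ℝ × ℝ} (hk : k ∈ K) : leviScalarMap n k ∈ leviGraph 𝔥 K θ φ :=
  Submodule.mem_sup_right (Submodule.mem_map_of_mem hk)

theorem mem_leviGraph {s : LeviPart n} :
    s ∈ leviGraph 𝔥 K θ φ ↔ ∃ A ∈ 𝔥, ∃ k ∈ K, s = (θ A + k.1, φ A + k.2, A) := by
  simp [leviGraph, Submodule.mem_sup, leviGraphMap, leviScalarMap, eq_comm]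

theorem coe_semidirect_leviGraph :
    (semidirect (leviGraph 𝔥 K θ φ) : Set _) =
      {F | ∃ A ∈ 𝔥, ∃ k ∈ K, ∃ X, F = coElem (θ A + k.1) (φ A + k.2) A X} := by
  ext F
  simp only [SetLike.mem_coe, mem_semidirect, mem_leviGraph, Set.mem_ofPred_eq]
  constructor
  · rintro ⟨_, ⟨A, hA, k, hk, rfl⟩, X, rfl⟩
    exact ⟨A, hA, k, hk, X, rfl⟩
  · rintro ⟨A, hA, k, hk, X, rfl⟩
    exact ⟨_, ⟨A, hA, k, hk, rfl⟩, X, rfl⟩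

theorem leviGraph_commutator_mem (hsub : IsLieSub (𝔥 : Set (Module.End ℝ (Fin n → ℝ))))
    (hθ : VanishOnComm (𝔥 : Set _) θ) (hφ : VanishOnComm (𝔥 : Set _) φ) {s s' : LeviPart n}
    (hs : s ∈ leviGraph 𝔥 K θ φ) (hs' : s' ∈ leviGraph 𝔥 K θ φ) :
    (0, 0, s.2.2 * s'.2.2 - s'.2.2 * s.2.2) ∈ leviGraph 𝔥 K θ φ := by
  obtain ⟨A, hA, k, -, rfl⟩ := mem_leviGraph.1 hs
  obtain ⟨A', hA', k', -, rfl⟩ := mem_leviGraph.1 hs'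
  refine mem_leviGraph.2 ⟨A * A' - A' * A, hsub.2.2.2 A hA A' hA', 0, K.zero_mem, ?_⟩
  simp [hθ A hA A' hA', hφ A hA A' hA']

theorem leviScalarMap_mem_leviWeakSpan (hn : 1 ≤ n) {k : ℝ × ℝ} (hk : k ∈ K) :
    leviScalarMap n k ∈ leviWeakSpan (leviGraph 𝔥 K θ φ) := by
  let Q : (Fin n → ℝ) →ₗ[ℝ] LeviPart n :=
    (LinearMap.proj (⟨0, hn⟩ : Fin n)).smulRight (leviScalarMap n k)
  have hQ : IsLeviWeakCurv (leviGraph 𝔥 K θ φ) Q :=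
    ⟨fun x => Submodule.smul_mem _ (x ⟨0, hn⟩) (leviScalarMap_mem hk), by
      simp [Q, leviScalarMap]⟩
  exact Submodule.subset_span ⟨Q, hQ, 1, by simp [Q]⟩

theorem leviGraphMap_mem_leviWeakSpan (hwb : IsWeakBerger n 𝔥)
    {A : Module.End ℝ (Fin n → ℝ)} (hA : A ∈ 𝔥) :
    leviGraphMap θ φ A ∈ leviWeakSpan (leviGraph 𝔥 K θ φ) := by
  have hle : weakSpan n 𝔥 ≤ (leviWeakSpan (leviGraph 𝔥 K θ φ)).comap (leviGraphMap θ φ) := by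
    refine Submodule.span_le.2 ?_
    rintro _ ⟨P, hP, U, rfl⟩
    exact Submodule.subset_span
      ⟨leviGraphMap θ φ ∘ₗ P, ⟨fun x => leviGraphMap_mem (hP.1 x), hP.2⟩, U, rfl⟩
  exact hle ((SetLike.coe_injective hwb).ge hA)

theorem leviGraph_le_leviWeakSpan (hn : 1 ≤ n) (hwb : IsWeakBerger n 𝔥) :
    leviGraph 𝔥 K θ φ ≤ leviWeakSpan (leviGraph 𝔥 K θ φ) :=
  sup_le (Submodule.map_le_iff_le_comap.2 fun _ => leviGraphMap_mem_leviWeakSpan hwb)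
    (Submodule.map_le_iff_le_comap.2 fun _ => leviScalarMap_mem_leviWeakSpan hn)

theorem goodAlg_semidirect_leviGraph (hn : 1 ≤ n)
    (hsub : IsLieSub (𝔥 : Set (Module.End ℝ (Fin n → ℝ)))) (hso : (𝔥 : Set _) ⊆ soE n)
    (hwb : IsWeakBerger n 𝔥) (hθ : VanishOnComm (𝔥 : Set _) θ)
    (hφ : VanishOnComm (𝔥 : Set _) φ) (hne : (∃ k ∈ K, k.1 ≠ 0) ∨ NonzeroOn (𝔥 : Set _) θ) :
    GoodAlg n (semidirect (leviGraph 𝔥 K θ φ) : Set _) := by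
  refine goodAlg_semidirect hn ?_ (fun s hs s' hs' => leviGraph_commutator_mem hsub hθ hφ hs hs')
    (leviGraph_le_leviWeakSpan hn hwb) ?_
  · intro s hs
    obtain ⟨A, hA, k, -, rfl⟩ := mem_leviGraph.1 hs
    exact hso hA
  · rcases hne with ⟨k, hk, hne⟩ | ⟨A, hA, hne⟩
    · exact ⟨_, leviScalarMap_mem hk, hne⟩
    · exact ⟨_, leviGraphMap_mem hA, hne⟩

end LeviGraph

section Families

variable {n : ℕ} (𝔥 : Submodule ℝ (Module.End ℝ (Fin n → ℝ)))

theorem G1_eq_semidirect : G1 n 𝔥 = semidirect (leviGraph 𝔥 ⊤ 0 0) := by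
  rw [coe_semidirect_leviGraph]
  ext F
  constructor
  · rintro ⟨b, a, A, hA, X, rfl⟩
    exact ⟨A, hA, (b, a), trivial, X, by simp⟩
  · rintro ⟨A, hA, k, -, X, rfl⟩
    exact ⟨k.1, k.2, A, hA, X, by simp⟩

theorem G3_eq_semidirect (φ : Module.End ℝ (Fin n → ℝ) →ₗ[ℝ] ℝ) :
    G3 n 𝔥 φ = semidirect (leviGraph 𝔥 (ℝ ∙ (1, 0)) 0 φ) := by
  rw [coe_semidirect_leviGraph]
  ext F
  constructor
  · rintro ⟨b, A, hA, X, rfl⟩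
    exact ⟨A, hA, b • (1, 0), Submodule.smul_mem _ b (Submodule.mem_span_singleton_self _), X,
      by simp⟩
  · rintro ⟨A, hA, k, hk, X, rfl⟩
    obtain ⟨b, rfl⟩ := Submodule.mem_span_singleton.1 hk
    exact ⟨b, A, hA, X, by simp⟩

theorem G4_eq_semidirect (α : ℝ) (θ : Module.End ℝ (Fin n → ℝ) →ₗ[ℝ] ℝ) :
    G4 n 𝔥 α θ = semidirect (leviGraph 𝔥 (ℝ ∙ (α, 1)) θ 0) := by
  rw [coe_semidirect_leviGraph]
  ext F
  constructor
  · rintro ⟨a, A, hA, X, rfl⟩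
    exact ⟨A, hA, a • (α, 1), Submodule.smul_mem _ a (Submodule.mem_span_singleton_self _), X,
      by simp [add_comm, mul_comm]⟩
  · rintro ⟨A, hA, k, hk, X, rfl⟩
    obtain ⟨a, rfl⟩ := Submodule.mem_span_singleton.1 hk
    exact ⟨a, A, hA, X, by simp [add_comm, mul_comm]⟩

theorem G6_eq_semidirect (θ φ : Module.End ℝ (Fin n → ℝ) →ₗ[ℝ] ℝ) :
    G6 n 𝔥 θ φ = semidirect (leviGraph 𝔥 ⊥ θ φ) := by
  rw [coe_semidirect_leviGraph]
  ext F
  simp [G6]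

theorem G2_eq_G3 (h : Set (Module.End ℝ (Fin n → ℝ))) : G2 n h = G3 n h 0 := rfl

theorem G5_eq_G6 (h : Set (Module.End ℝ (Fin n → ℝ)))
    (θ : Module.End ℝ (Fin n → ℝ) →ₗ[ℝ] ℝ) : G5 n h θ = G6 n h θ 0 := rfl

end Families

/-- For every weak Berger algebra `𝔥 ⊆ so(n)`, each of the six algebras
`ℝ·id ⊕ 𝔤^{1,𝔥}`, `ℝ·id ⊕ 𝔤^{2,𝔥}`, `ℝ·id ⊕ 𝔤^{3,𝔥,φ}`, `𝔤^{α,θ,1,𝔥}`,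
`𝔤^{θ,2,𝔥}`, `𝔤^{θ,3,𝔥,φ}` (with admissible parameters, and nonzero center
whenever a nonzero `φ` is required) is a weakly irreducible Berger subalgebra
of `co(1,n+1)` not contained in `so(1,n+1)`. -/
theorem realization_families_Berger (n : ℕ) (hn : 1 ≤ n)
    (h : Set (Module.End ℝ (Fin n → ℝ)))
    (hsub : IsLieSub h) (hso : h ⊆ soE n) (hwb : IsWeakBerger n h) :
    GoodAlg n (G1 n h) ∧
    GoodAlg n (G2 n h) ∧
    (∀ φ : Module.End ℝ (Fin n → ℝ) →ₗ[ℝ] ℝ,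
      VanishOnComm h φ → NonzeroOn h φ → CenterNonzero h →
      GoodAlg n (G3 n h φ)) ∧
    (∀ (α : ℝ) (θ : Module.End ℝ (Fin n → ℝ) →ₗ[ℝ] ℝ),
      VanishOnComm h θ → ¬ (α = 0 ∧ ∀ A ∈ h, θ A = 0) →
      GoodAlg n (G4 n h α θ)) ∧
    (∀ θ : Module.End ℝ (Fin n → ℝ) →ₗ[ℝ] ℝ,
      VanishOnComm h θ → NonzeroOn h θ → GoodAlg n (G5 n h θ)) ∧
    (∀ θ φ : Module.End ℝ (Fin n → ℝ) →ₗ[ℝ] ℝ,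
      VanishOnComm h θ → VanishOnComm h φ → NonzeroOn h θ → NonzeroOn h φ →
      CenterNonzero h → GoodAlg n (G6 n h θ φ)) := by
  obtain ⟨𝔥, rfl⟩ : ∃ 𝔥 : Submodule ℝ (Module.End ℝ (Fin n → ℝ)), (𝔥 : Set _) = h := ⟨_, hwb⟩
  have good {K θ φ} := goodAlg_semidirect_leviGraph (K := K) (θ := θ) (φ := φ) hn hsub hso hwb
  have hzero : VanishOnComm (𝔥 : Set (Module.End ℝ (Fin n → ℝ))) 0 := fun _ _ _ _ => rfl
  have scalar_ne_zero : ∃ k ∈ Submodule.span ℝ {((1 : ℝ), (0 : ℝ))}, k.1 ≠ 0 :=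
    ⟨(1, 0), Submodule.mem_span_singleton_self _, one_ne_zero⟩
  simp only [G2_eq_G3, G5_eq_G6, G1_eq_semidirect, G3_eq_semidirect, G4_eq_semidirect,
    G6_eq_semidirect]
  refine ⟨good hzero hzero (Or.inl ⟨(1, 0), trivial, one_ne_zero⟩),
    good hzero hzero (Or.inl scalar_ne_zero),
    fun φ hφ _ _ => good hzero hφ (Or.inl scalar_ne_zero), fun α θ hθ hne => good hθ hzero ?_,
    fun θ hθ hne => good hθ hzero (Or.inr hne),
    fun θ φ hθ hφ hne _ _ => good hθ hφ (Or.inr hne)⟩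
  rcases not_and_or.1 hne with hα | hθ_ne
  · exact Or.inl ⟨(α, 1), Submodule.mem_span_singleton_self _, hα⟩
  · exact Or.inr (by simpa [NonzeroOn] using hθ_ne)

end Weyl
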